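/- Let A be a brick-finite finite-dimensional algebra over an algebraically closed field of rank n. Then the only semibrick of size n in mod A is the set of the n simple A-modules; that is, if {X_1, ..., X_n} is a set of n pairwise non-isomorphic, pairwise Hom-orthogonal bricks, then each X_i is a simple A-module and {X_1, ..., X_n} is a complete set of representatives of the simple A-modules. -/

import Mathlib

/-!
Let `T` be the torsion class generated by the bricks `X i`. If a torsion class `U` strictly contains
`T` and has a minimal left approximation `A → M`, then some relatively simple `B` in `U` receives no
map from `T`, and `{Y ∈ U | Hom(Y, B) = 0}` again contains `T` and has such an approximation. As
there are finitely many bricks, finitely many of these mutations lead from `mod A` to `T`, so `T`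
has a minimal left approximation `A → M`, sending `1` to `m`, say. Let `C` be its cokernel.

The `X i` are simple objects of the wide subcategory of those `V` in `T` such that all maps from `T`
to `V` have their kernel in `T`; equivalently, `Hom(C, V) = 0`. If `N` is Ext-projective in `T`,
then a projective presentation of `N` makes `dim Hom(N, Y)`, for `Y` in `T`, a linear function of
the composition multiplicities of `Y`. The Ext-projective covers of the `X i` are dual to the `X i`,
so the multiplicity vectors of the `X i` are linearly independent. There are as many of them as
simple modules, so `Hom(C, X i) = 0` for all `i` forces `dim Hom(C, -) = 0` on `T`, hence `C = 0`.
Thus `M = A m`, and every nonzero `y` in `X i`, being the image of `m` under a surjection `M → X i`,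
generates `X i`.
-/

universe u v

open Module

/-- A finite-dimensional left module over the `k`-algebra `A`. -/
structure FDMod (k A : Type u) [Field k] [Ring A] [Algebra k A] : Type (u + 1) where
  carrier : Type u
  [addCommGroup : AddCommGroup carrier]
  [moduleK : Module k carrier]
  [moduleA : Module A carrier]
  [tower : IsScalarTower k A carrier]
  [fd : FiniteDimensional k carrier]

attribute [instance] FDMod.addCommGroup FDMod.moduleK FDMod.moduleA FDMod.tower FDMod.fd

variable {k A : Type u} [Field k] [Ring A] [Algebra k A]

/-- `M` is a brick: `M ≠ 0` and every `A`-endomorphism of `M` is a `k`-scalar,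
i.e. `End_A(M) ≅ k`. -/
def FDMod.IsBrick (M : FDMod k A) : Prop :=
  Nontrivial M.carrier ∧ ∀ f : M.carrier →ₗ[A] M.carrier, ∃ c : k, ∀ x : M.carrier, f x = c • x

/-- `M` and `N` are Hom-orthogonal: `Hom_A(M,N) = 0` and `Hom_A(N,M) = 0`. -/
def FDMod.HomOrth (M N : FDMod k A) : Prop :=
  (∀ f : M.carrier →ₗ[A] N.carrier, f = 0) ∧ (∀ f : N.carrier →ₗ[A] M.carrier, f = 0)

/-- `M` and `N` are isomorphic as `A`-modules. -/
def FDMod.Iso (M N : FDMod k A) : Prop :=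
  Nonempty (M.carrier ≃ₗ[A] N.carrier)

/-- A family of modules forms a Hom-orthogonal set: the modules are nonzero,
pairwise non-isomorphic and pairwise Hom-orthogonal. -/
def HomOrthFamily {I : Type v} (X : I → FDMod k A) : Prop :=
  (∀ i, Nontrivial (X i).carrier) ∧
  (∀ i j, i ≠ j → ¬(X i).Iso (X j)) ∧
  (∀ i j, i ≠ j → (X i).HomOrth (X j))

/-- `A` is brick-finite: there are only finitely many isomorphism classes of bricks. -/
def BrickFinite (k A : Type u) [Field k] [Ring A] [Algebra k A] : Prop :=
  ∃ (m : ℕ) (f : Fin m → FDMod k A), ∀ N : FDMod k A, N.IsBrick → ∃ i, N.Iso (f i)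

/-- `A` has rank `n`: there are exactly `n` isomorphism classes of simple modules. -/
def HasRank (k A : Type u) [Field k] [Ring A] [Algebra k A] (n : ℕ) : Prop :=
  ∃ S : Fin n → FDMod k A,
    (∀ i, IsSimpleModule A (S i).carrier) ∧
    (∀ i j, i ≠ j → ¬(S i).Iso (S j)) ∧
    (∀ T : FDMod k A, IsSimpleModule A T.carrier → ∃ i, T.Iso (S i))

section LinearMaps

variable {R M N P : Type*} [Ring R] [AddCommGroup M] [AddCommGroup N] [AddCommGroup P]
  [Module R M] [Module R N] [Module R P]

theorem exists_comp_eq_of_ker_le {b : M →ₗ[R] N} (hb : Function.Surjective b) {a : M →ₗ[R] P}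
    (h : LinearMap.ker b ≤ LinearMap.ker a) : ∃ φ : N →ₗ[R] P, φ ∘ₗ b = a := by
  refine ⟨(LinearMap.ker b).liftQ a h ∘ₗ (b.quotKerEquivOfSurjective hb).symm.toLinearMap, ?_⟩
  ext x
  have hx : (b.quotKerEquivOfSurjective hb).symm (b x) = (LinearMap.ker b).mkQ x :=
    (LinearEquiv.symm_apply_eq _).2 rfl
  simp [hx]

theorem eq_zero_of_comp_surjective {f : M →ₗ[R] N} (hf : Function.Surjective f) {g : N →ₗ[R] P}
    (h : g ∘ₗ f = 0) : g = 0 :=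
  (LinearMap.cancel_right hf).1 (h.trans (LinearMap.zero_comp f).symm)

theorem eq_zero_of_injective_comp {g : N →ₗ[R] P} (hg : Function.Injective g) {f : M →ₗ[R] N}
    (h : g ∘ₗ f = 0) : f = 0 :=
  (LinearMap.cancel_left hg).1 (h.trans (LinearMap.comp_zero g).symm)

theorem exists_pushout {π : M →ₗ[R] N} (hπ : Function.Surjective π)
    (φ : LinearMap.ker π →ₗ[R] P) :
    ∃ (W : Submodule R (P × M)) (q : (P × M) ⧸ W →ₗ[R] N),
      Function.Injective (W.mkQ ∘ₗ LinearMap.inl R P M) ∧ Function.Surjective q ∧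
      Function.Exact (W.mkQ ∘ₗ LinearMap.inl R P M) q ∧
      ∀ x : LinearMap.ker π, W.mkQ (0, (x : M)) = W.mkQ (φ x, 0) := by
  let W := LinearMap.range (φ.prod (-(LinearMap.ker π).subtype))
  have hφ (x : LinearMap.ker π) : W.mkQ (0, (x : M)) = W.mkQ (φ x, 0) :=
    ((Submodule.Quotient.eq W).2 ⟨x, by simp⟩).symm
  let q : (P × M) ⧸ W →ₗ[R] N := W.liftQ (π ∘ₗ LinearMap.snd R P M) <| by
    rintro _ ⟨x, rfl⟩
    simp
  refine ⟨W, q, LinearMap.ker_eq_bot.1 ((Submodule.eq_bot_iff _).2 fun y hy ↦ ?_),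
    fun n ↦ (hπ n).imp' (fun x ↦ W.mkQ (0, x)) fun _ hx ↦ hx, fun e ↦ ⟨fun he ↦ ?_, ?_⟩, hφ⟩
  · obtain ⟨x, hx⟩ := (Submodule.Quotient.mk_eq_zero W).1 hy
    obtain ⟨hxy, hx0⟩ := Prod.ext_iff.1 hx
    have hx0 : x = 0 := by simpa using hx0
    simpa [hx0] using hxy.symm
  · obtain ⟨⟨y, x⟩, rfl⟩ := W.mkQ_surjective e
    have hx : x ∈ LinearMap.ker π := he
    refine ⟨y + φ ⟨x, hx⟩, ?_⟩
    calc W.mkQ (y + φ ⟨x, hx⟩, 0) = W.mkQ (y, 0) + W.mkQ (φ ⟨x, hx⟩, 0) := by rw [← map_add]; simp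
      _ = W.mkQ (y, x) := by rw [← hφ, ← map_add]; simp
  · rintro ⟨y, rfl⟩
    simp [q]

end LinearMaps

namespace FDMod

instance : CoeSort (FDMod k A) (Type u) := ⟨carrier⟩

instance (M : FDMod k A) : IsNoetherian A M := isNoetherian_of_tower k inferInstance

instance (M : FDMod k A) : IsArtinian A M := isArtinian_of_tower k inferInstance

instance (M : FDMod k A) (p : Submodule A M) : FiniteDimensional k p :=
  inferInstanceAs (FiniteDimensional k (p.restrictScalars k))

instance (M : FDMod k A) (p : Submodule A M) : FiniteDimensional k (M ⧸ p) :=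
  Module.Finite.of_surjective (p.mkQ.restrictScalars k) p.mkQ_surjective

instance (M N : FDMod k A) : FiniteDimensional k (M →ₗ[A] N) :=
  FiniteDimensional.of_injective (V₂ := M →ₗ[k] N)
    (LinearMap.restrictScalarsₗ k A M N k) (LinearMap.restrictScalars_injective k)

/-- A submodule as an object of `mod A`. -/
abbrev sub (M : FDMod k A) (p : Submodule A M) : FDMod k A := ⟨p⟩

/-- A quotient module as an object of `mod A`. -/
abbrev quo (M : FDMod k A) (p : Submodule A M) : FDMod k A := ⟨M ⧸ p⟩

/-- The direct sum of two objects of `mod A`. -/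
abbrev prod (M N : FDMod k A) : FDMod k A := ⟨M × N⟩

/-- The direct sum of `r` copies of an object of `mod A`. -/
abbrev pow (M : FDMod k A) (r : ℕ) : FDMod k A := ⟨Fin r → M⟩

/-- `Hom_A(M, N) = 0`. -/
def HomZero (M N : FDMod k A) : Prop := ∀ f : M →ₗ[A] N, f = 0

variable {M N P : FDMod k A}

theorem HomZero.of_surjective (h : M.HomZero P) {f : M →ₗ[A] N} (hf : Function.Surjective f) :
    N.HomZero P :=
  fun _ ↦ eq_zero_of_comp_surjective hf (h _)

theorem HomZero.of_injective (h : M.HomZero P) {f : N →ₗ[A] P} (hf : Function.Injective f) :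
    M.HomZero N :=
  fun _ ↦ eq_zero_of_injective_comp hf (h _)

theorem HomZero.of_ker {f : M →ₗ[A] N} (hf : Function.Surjective f)
    (hker : (M.sub (LinearMap.ker f)).HomZero P) (hN : N.HomZero P) : M.HomZero P := by
  intro g
  obtain ⟨φ, rfl⟩ := exists_comp_eq_of_ker_le hf (a := g)
    fun x hx ↦ LinearMap.congr_fun (hker (g ∘ₗ (LinearMap.ker f).subtype)) ⟨x, hx⟩
  rw [hN φ, LinearMap.zero_comp]

theorem finrank_sub_lt {p : Submodule A M} (hp : p ≠ ⊤) : finrank k p < finrank k M :=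
  Submodule.finrank_lt (s := p.restrictScalars k) (by simpa using hp)

theorem finrank_quo_lt {p : Submodule A M} (hp : p ≠ ⊥) : finrank k (M ⧸ p) < finrank k M := by
  rw [← (Submodule.Quotient.restrictScalarsEquiv k p).finrank_eq,
    ← (p.restrictScalars k).finrank_quotient_add_finrank]
  have : Nontrivial (p.restrictScalars k) := Submodule.nontrivial_iff_ne_bot.2 (by simpa using hp)
  exact Nat.lt_add_of_pos_right finrank_pos

end FDMod

/-! ### Torsion classes -/

/-- Torsion classes in `mod A`, that is, classes closed under quotients and extensions. -/
structure IsTorsionClass (U : Set (FDMod k A)) : Prop where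
  of_subsingleton : ∀ {M : FDMod k A}, Subsingleton M → M ∈ U
  of_surjective : ∀ {M N : FDMod k A} (f : M →ₗ[A] N), Function.Surjective f → M ∈ U → N ∈ U
  of_ker : ∀ {M N : FDMod k A} (f : M →ₗ[A] N), Function.Surjective f →
    M.sub (LinearMap.ker f) ∈ U → N ∈ U → M ∈ U

/-- The left Hom-perpendicular class `{M | Hom_A(M, F) = 0 for all F ∈ 𝓕}`. -/
def leftPerp (𝓕 : Set (FDMod k A)) : Set (FDMod k A) := {M | ∀ F ∈ 𝓕, M.HomZero F}

theorem isTorsionClass_leftPerp (𝓕 : Set (FDMod k A)) : IsTorsionClass (leftPerp 𝓕) where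
  of_subsingleton _ _ _ _ := Subsingleton.elim _ _
  of_surjective _ hf hM F hF := (hM F hF).of_surjective hf
  of_ker _ hf hker hN F hF := FDMod.HomZero.of_ker hf (hker F hF) (hN F hF)

namespace IsTorsionClass

variable {U V : Set (FDMod k A)} {M N : FDMod k A}

theorem univ : IsTorsionClass (Set.univ : Set (FDMod k A)) where
  of_subsingleton _ := trivial
  of_surjective _ _ _ := trivial
  of_ker _ _ _ _ := trivial

theorem inter (hU : IsTorsionClass U) (hV : IsTorsionClass V) : IsTorsionClass (U ∩ V) where
  of_subsingleton h := ⟨hU.of_subsingleton h, hV.of_subsingleton h⟩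
  of_surjective f hf h := ⟨hU.of_surjective f hf h.1, hV.of_surjective f hf h.2⟩
  of_ker f hf hker hN := ⟨hU.of_ker f hf hker.1 hN.1, hV.of_ker f hf hker.2 hN.2⟩

variable (hU : IsTorsionClass U)
include hU

theorem of_equiv (e : M ≃ₗ[A] N) (hM : M ∈ U) : N ∈ U :=
  hU.of_surjective e.toLinearMap e.surjective hM

theorem sub_range (g : M →ₗ[A] N) (hM : M ∈ U) : N.sub (LinearMap.range g) ∈ U :=
  hU.of_surjective g.rangeRestrict g.surjective_rangeRestrict hM

theorem quo (p : Submodule A M) (hM : M ∈ U) : M.quo p ∈ U :=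
  hU.of_surjective (N := M.quo p) p.mkQ p.mkQ_surjective hM

theorem sub_top_iff : M.sub ⊤ ∈ U ↔ M ∈ U :=
  ⟨hU.of_equiv (M := M.sub ⊤) Submodule.topEquiv,
    hU.of_equiv (N := M.sub ⊤) Submodule.topEquiv.symm⟩

theorem of_exact {L : FDMod k A} {i : L →ₗ[A] M} {f : M →ₗ[A] N} (h : Function.Exact i f)
    (hf : Function.Surjective f) (hL : L ∈ U) (hN : N ∈ U) : M ∈ U :=
  hU.of_ker f hf (h.linearMap_ker_eq ▸ hU.sub_range i hL) hN

theorem prod (hM : M ∈ U) (hN : N ∈ U) : M.prod N ∈ U :=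
  hU.of_exact (M := M.prod N) .inl_snd LinearMap.snd_surjective hM hN

theorem sub_sup {p q : Submodule A M} (hp : M.sub p ∈ U) (hq : M.sub q ∈ U) :
    M.sub (p ⊔ q) ∈ U := by
  simpa [LinearMap.range_coprod] using
    hU.sub_range (N := M) (p.subtype.coprod q.subtype) (hU.prod hp hq)

theorem sub_sSup {S : Set (Submodule A M)} (hS : ∀ p ∈ S, M.sub p ∈ U) : M.sub (sSup S) ∈ U := by
  let T : Set (Submodule A M) := {p | M.sub p ∈ U ∧ p ≤ sSup S}
  have hT : sSup T = sSup S :=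
    le_antisymm (sSup_le fun p hp ↦ hp.2) (sSup_le_sSup fun p hp ↦ ⟨hS p hp, le_sSup hp⟩)
  have hmem : sSup T ∈ T := CompleteLattice.WellFoundedGT.isSupClosedCompact _ inferInstance T
    ⟨⊥, hU.of_subsingleton (inferInstanceAs (Subsingleton (⊥ : Submodule A M))), bot_le⟩
    fun p hp q hq ↦ ⟨hU.sub_sup hp.1 hq.1, sup_le hp.2 hq.2⟩
  exact hT ▸ hmem.1

theorem sub_iSup_range {ι : Sort*} {N : ι → FDMod k A} (g : ∀ i, N i →ₗ[A] M)
    (hN : ∀ i, N i ∈ U) : M.sub (⨆ i, LinearMap.range (g i)) ∈ U := by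
  refine hU.sub_sSup ?_
  rintro _ ⟨i, rfl⟩
  exact hU.sub_range _ (hN i)

theorem pow (hM : M ∈ U) (r : ℕ) : M.pow r ∈ U := by
  have h := hU.sub_iSup_range (M := M.pow r)
    (LinearMap.single A (fun _ : Fin r ↦ (M : Type u))) fun _ ↦ hM
  rwa [LinearMap.iSup_range_single, hU.sub_top_iff] at h

theorem sub_comap_mkQ {p : Submodule A M} (hp : M.sub p ∈ U) {q : Submodule A (M ⧸ p)}
    (hq : (M.quo p).sub q ∈ U) : M.sub (q.comap p.mkQ) ∈ U := by
  have hle : p ≤ q.comap p.mkQ := p.ker_mkQ.symm.le.trans (LinearMap.ker_le_comap _)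
  let f : M.sub (q.comap p.mkQ) →ₗ[A] (M.quo p).sub q := p.mkQ.restrict fun _ hx ↦ hx
  have hf : Function.Surjective f := by
    rintro ⟨y, hy⟩
    obtain ⟨x, rfl⟩ := p.mkQ_surjective y
    exact ⟨⟨x, hy⟩, rfl⟩
  have hex : Function.Exact (Submodule.inclusion hle) f := by
    rintro ⟨x, hx⟩
    simp [f, Subtype.ext_iff]
  exact hU.of_exact (L := M.sub p) hex hf hp hq

end IsTorsionClass

/-- The largest submodule of `K ≤ M` lying in the torsion class `U`. -/
def torsionPart (U : Set (FDMod k A)) {M : FDMod k A} (K : Submodule A M) : Submodule A M :=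
  sSup {p | p ≤ K ∧ M.sub p ∈ U}

section TorsionPart

variable {U : Set (FDMod k A)} {M Y : FDMod k A} {K : Submodule A M}

theorem torsionPart_le : torsionPart U K ≤ K := sSup_le fun _ hp ↦ hp.1

theorem sub_torsionPart_mem (hU : IsTorsionClass U) : M.sub (torsionPart U K) ∈ U :=
  hU.sub_sSup fun _ hp ↦ hp.2

theorem le_torsionPart {p : Submodule A M} (hp : p ≤ K) (hpU : M.sub p ∈ U) :
    p ≤ torsionPart U K :=
  le_sSup ⟨hp, hpU⟩

theorem eq_zero_of_range_le_map_torsionPart (hU : IsTorsionClass U) (hY : Y ∈ U)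
    (g : Y →ₗ[A] M ⧸ torsionPart U K)
    (hg : LinearMap.range g ≤ K.map (torsionPart U K).mkQ) : g = 0 := by
  have hcomap : (LinearMap.range g).comap (torsionPart U K).mkQ ≤ K := by
    refine (Submodule.comap_mono hg).trans ?_
    rw [Submodule.comap_map_mkQ, sup_eq_right.2 torsionPart_le]
  have hle := le_torsionPart hcomap (hU.sub_comap_mkQ (sub_torsionPart_mem hU)
    (hU.sub_range (N := M.quo (torsionPart U K)) g hY))
  rw [← LinearMap.range_eq_bot, ← Submodule.map_comap_eq_of_surjective
    (torsionPart U K).mkQ_surjective (LinearMap.range g), ← LinearMap.le_ker_iff_map]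
  simpa using hle

theorem homZero_quo_torsionPart_top (hU : IsTorsionClass U) (hY : Y ∈ U) (M : FDMod k A) :
    Y.HomZero (M.quo (torsionPart U ⊤)) := fun g ↦
  eq_zero_of_range_le_map_torsionPart hU hY g <| by
    rw [Submodule.map_top, Submodule.range_mkQ]
    exact le_top

theorem torsionPart_top_ne_top (hU : IsTorsionClass U) (hM : M ∉ U) :
    torsionPart U (⊤ : Submodule A M) ≠ ⊤ := fun h ↦
  hM (hU.sub_top_iff.1 (h ▸ sub_torsionPart_mem hU))

end TorsionPart

/-! ### Ext-projective modules -/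

/-- `N` is Ext-projective with respect to `U`: every extension of `N` by a module in `U` splits,
that is, `Ext¹_A(N, U) = 0`. -/
def IsExtProjective (U : Set (FDMod k A)) (N : FDMod k A) : Prop :=
  ∀ ⦃E : FDMod k A⦄ (q : E →ₗ[A] N), Function.Surjective q → E.sub (LinearMap.ker q) ∈ U →
    ∃ σ : N →ₗ[A] E, q ∘ₗ σ = LinearMap.id

namespace IsExtProjective

variable {U : Set (FDMod k A)} {N N' P Y Z : FDMod k A}

theorem exists_lift (hU : IsTorsionClass U) (hN : IsExtProjective U N) {p : Z →ₗ[A] Y}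
    (hp : Function.Surjective p) (hker : Z.sub (LinearMap.ker p) ∈ U) (g : N →ₗ[A] Y) :
    ∃ h : N →ₗ[A] Z, p ∘ₗ h = g := by
  let pullback := LinearMap.eqLocus (g ∘ₗ LinearMap.fst A N Z) (p ∘ₗ LinearMap.snd A N Z)
  let q : pullback →ₗ[A] N := LinearMap.fst A N Z ∘ₗ pullback.subtype
  have hq : Function.Surjective q := fun x ↦ by
    obtain ⟨z, hz⟩ := hp (g x)
    exact ⟨⟨(x, z), hz.symm⟩, rfl⟩
  let i : LinearMap.ker p →ₗ[A] LinearMap.ker q :=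
    ((LinearMap.inr A N Z ∘ₗ (LinearMap.ker p).subtype).codRestrict pullback
      fun z ↦ by simp [pullback]).codRestrict (LinearMap.ker q) fun _ ↦ rfl
  have hi : Function.Surjective i := by
    rintro ⟨⟨⟨x, z⟩, hxz⟩, hx : x = 0⟩
    subst hx
    exact ⟨⟨z, by simpa [pullback, eq_comm] using hxz⟩, rfl⟩
  obtain ⟨σ, hσ⟩ := hN (E := (N.prod Z).sub pullback) q hq
    (hU.of_surjective (M := Z.sub _) (N := ((N.prod Z).sub pullback).sub _) i hi hker)
  refine ⟨LinearMap.snd A N Z ∘ₗ pullback.subtype ∘ₗ σ, LinearMap.ext fun x ↦ ?_⟩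
  exact ((σ x).2.symm.trans (congrArg g (LinearMap.congr_fun hσ x)) :)

theorem exists_extension (hU : IsTorsionClass U) (hN : IsExtProjective U N) (hY : Y ∈ U)
    {π : P →ₗ[A] N} (hπ : Function.Surjective π) (φ : LinearMap.ker π →ₗ[A] Y) :
    ∃ ψ : P →ₗ[A] Y, ψ ∘ₗ (LinearMap.ker π).subtype = φ := by
  obtain ⟨W, q, hj, hq, hex, hφ⟩ := exists_pushout hπ φ
  let j : Y →ₗ[A] (Y × P) ⧸ W := W.mkQ ∘ₗ LinearMap.inl A Y P
  obtain ⟨r, hr⟩ := ((hex.split_tfae hj hq).out 0 1).1 <| hN (E := (Y.prod P).quo W) q hq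
    (hex.linearMap_ker_eq ▸ hU.sub_range (N := (Y.prod P).quo W) j hY)
  refine ⟨r ∘ₗ W.mkQ ∘ₗ LinearMap.inr A Y P, LinearMap.ext fun x ↦ ?_⟩
  exact (congrArg r (hφ x)).trans (LinearMap.congr_fun hr (φ x))

theorem of_retract (hU : IsTorsionClass U) (hN : IsExtProjective U N) {i : N' →ₗ[A] N}
    {r : N →ₗ[A] N'} (hri : r ∘ₗ i = LinearMap.id) : IsExtProjective U N' := by
  intro E q hq hker
  obtain ⟨h, rfl⟩ := hN.exists_lift hU hq hker r
  exact ⟨h ∘ₗ i, hri⟩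

theorem homZero_quo (hU : IsTorsionClass U) (hN : IsExtProjective U N) {W : Submodule A Z}
    (hW : Z.sub W ∈ U) (h : ∀ f : N →ₗ[A] Z, LinearMap.range f ≤ W) : N.HomZero (Z.quo W) := by
  intro g
  obtain ⟨f, rfl⟩ := hN.exists_lift hU W.mkQ_surjective (by rwa [W.ker_mkQ]) g
  rw [← LinearMap.range_le_ker_iff, W.ker_mkQ]
  exact h f

end IsExtProjective

/-! ### Approximations and relatively simple modules -/

/-- `a : A → M`, `a ↦ a • m`, is a left approximation of the regular module by the class `U`. -/
structure IsApprox (U : Set (FDMod k A)) (M : FDMod k A) (m : M) : Prop where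
  mem : M ∈ U
  exists_hom : ∀ Y ∈ U, ∀ y : Y, ∃ h : M →ₗ[A] Y, h m = y

/-- A left approximation of the regular module which is left minimal. -/
structure IsMinApprox (U : Set (FDMod k A)) (M : FDMod k A) (m : M) : Prop
    extends IsApprox U M m where
  bijective : ∀ s : M →ₗ[A] M, s m = m → Function.Bijective s

/-- The cokernel of the map `A → M` sending `1` to `m`. -/
abbrev FDMod.coker (M : FDMod k A) (m : M) : FDMod k A := M.quo (Submodule.span A {m})

theorem FDMod.exists_comp_mkQ_coker {M Y : FDMod k A} {m : M} {f : M →ₗ[A] Y} (hf : f m = 0) :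
    ∃ c : M.coker m →ₗ[A] Y, c ∘ₗ (Submodule.span A {m}).mkQ = f :=
  ⟨Submodule.liftQ _ f ((Submodule.span_singleton_le_iff_mem ..).2 hf), Submodule.liftQ_mkQ _ _ _⟩

theorem mkQ_span_singleton_self {M : FDMod k A} (m : M) : (Submodule.span A {m}).mkQ m = 0 :=
  (Submodule.Quotient.mk_eq_zero _).2 (Submodule.mem_span_singleton_self m)

/-- The objects `V` of `U` such that every map from `U` to `V` has its kernel in `U`. They form a
wide subcategory of `mod A`. -/
def wide (U : Set (FDMod k A)) : Set (FDMod k A) :=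
  {V | V ∈ U ∧ ∀ Y ∈ U, ∀ g : Y →ₗ[A] V, Y.sub (LinearMap.ker g) ∈ U}

/-- The simple objects of the wide subcategory attached to `U`. -/
structure IsRelSimple (U : Set (FDMod k A)) (B : FDMod k A) : Prop where
  nontrivial : Nontrivial B
  mem_wide : B ∈ wide U
  surjective : ∀ Y ∈ U, ∀ g : Y →ₗ[A] B, g ≠ 0 → Function.Surjective g

section Approximation

variable {U : Set (FDMod k A)} {M V B : FDMod k A} {m : M}

theorem IsApprox.exists_isMinApprox (hU : IsTorsionClass U) (h : IsApprox U M m) :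
    ∃ M' m', IsMinApprox U M' m' := by
  obtain ⟨⟨N, x⟩, hx, hmin⟩ := exists_minimalFor_of_wellFoundedLT
    (fun p : Σ M : FDMod k A, M ↦ IsApprox U p.1 p.2) (fun p ↦ finrank k p.1) ⟨⟨M, m⟩, h⟩
  refine ⟨N, x, hx, fun s hs ↦
    IsNoetherian.bijective_of_surjective_endomorphism s (LinearMap.range_eq_top.1 ?_)⟩
  by_contra hne
  refine (FDMod.finrank_sub_lt hne).not_ge (hmin (j := ⟨N.sub (LinearMap.range s), x, x, hs⟩)
    ⟨hU.sub_range s hx.mem, fun Y hY y ↦ ?_⟩ (FDMod.finrank_sub_lt hne).le)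
  obtain ⟨f, hf⟩ := hx.exists_hom Y hY y
  exact ⟨f ∘ₗ (LinearMap.range s).subtype, hf⟩

namespace IsMinApprox

variable (h : IsMinApprox U M m)
include h

theorem isExtProjective (hU : IsTorsionClass U) : IsExtProjective U M := by
  intro E q hq hker
  obtain ⟨e, he⟩ := hq m
  obtain ⟨f, rfl⟩ := h.exists_hom E (hU.of_ker q hq hker h.mem) e
  let s := LinearEquiv.ofBijective (q ∘ₗ f) (h.bijective (q ∘ₗ f) he)
  exact ⟨f ∘ₗ s.symm.toLinearMap, LinearMap.ext s.apply_symm_apply⟩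

theorem coker_mem (hU : IsTorsionClass U) : M.coker m ∈ U := hU.quo _ h.mem

theorem isExtProjective_coker (hU : IsTorsionClass U) : IsExtProjective U (M.coker m) := by
  intro E q hq hker
  obtain ⟨f, hf⟩ := (h.isExtProjective hU).exists_lift hU hq hker (Submodule.span A {m}).mkQ
  have hfm : f m ∈ LinearMap.ker q :=
    (LinearMap.congr_fun hf m).trans (mkQ_span_singleton_self m)
  obtain ⟨v, hv⟩ := h.exists_hom _ hker ⟨f m, hfm⟩
  obtain ⟨σ, hσ⟩ := FDMod.exists_comp_mkQ_coker
    (f := f - (LinearMap.ker q).subtype ∘ₗ v) (m := m) (by simp [hv])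
  refine ⟨σ, (LinearMap.cancel_right (Submodule.mkQ_surjective (Submodule.span A {m}))).1 ?_⟩
  rw [LinearMap.comp_assoc, hσ, LinearMap.comp_sub, hf, ← LinearMap.comp_assoc,
    LinearMap.comp_ker_subtype, LinearMap.zero_comp, sub_zero, LinearMap.id_comp]

theorem mem_wide_iff (hU : IsTorsionClass U) (hV : V ∈ U) :
    V ∈ wide U ↔ (M.coker m).HomZero V := by
  constructor
  · intro hVw c
    let b : M →ₗ[A] V := c ∘ₗ (Submodule.span A {m}).mkQ
    have hbm : b m = 0 := by simp only [b, LinearMap.comp_apply, mkQ_span_singleton_self, map_zero]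
    obtain ⟨s, hs⟩ := h.exists_hom _ (hVw.2 M h.mem b) ⟨m, hbm⟩
    have hbij := h.bijective ((LinearMap.ker b).subtype ∘ₗ s) (congrArg Subtype.val hs)
    have hb : b = 0 := eq_zero_of_comp_surjective hbij.2 <| by
      rw [← LinearMap.comp_assoc, LinearMap.comp_ker_subtype, LinearMap.zero_comp]
    exact eq_zero_of_comp_surjective (Submodule.mkQ_surjective _) hb
  · refine fun hC ↦ ⟨hV, fun Y hY g ↦ ?_⟩
    have hker : LinearMap.ker g = ⨆ f : {f : M →ₗ[A] Y // g ∘ₗ f = 0}, LinearMap.range f.1 := by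
      refine le_antisymm (fun y hy ↦ ?_) (iSup_le fun f ↦ LinearMap.range_le_ker_iff.2 f.2)
      obtain ⟨f, rfl⟩ := h.exists_hom Y hY y
      obtain ⟨c, hc⟩ := FDMod.exists_comp_mkQ_coker (f := g ∘ₗ f) hy
      rw [hC c, LinearMap.zero_comp] at hc
      exact Submodule.mem_iSup_of_mem (p := fun f : {f : M →ₗ[A] Y // g ∘ₗ f = 0} ↦
        LinearMap.range f.1) ⟨f, hc.symm⟩ ⟨m, rfl⟩
    rw [hker]
    exact hU.sub_iSup_range _ fun _ ↦ h.mem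

end IsMinApprox

namespace IsRelSimple

theorem isBrick [IsAlgClosed k] (hB : IsRelSimple U B) : B.IsBrick := by
  have := hB.nontrivial
  refine ⟨hB.nontrivial, fun f ↦ ?_⟩
  obtain ⟨c, hc⟩ := Module.End.exists_eigenvalue (K := k) (V := B) (f.restrictScalars k)
  obtain ⟨x, hx⟩ := hc.exists_hasEigenvector
  have hfx : f x = c • x := hx.apply_eq_smul
  suffices f - c • LinearMap.id = 0 from ⟨c, fun y ↦ by
    simpa [sub_eq_zero] using LinearMap.congr_fun this y⟩
  by_contra hne
  have hinj := (IsNoetherian.bijective_of_surjective_endomorphism _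
    (hB.surjective B hB.mem_wide.1 _ hne)).1
  exact hx.2 (hinj (by simp [hfx]))

end IsRelSimple

theorem exists_isRelSimple_injective (hU : IsTorsionClass U) [Nontrivial V] (hV : V ∈ wide U) :
    ∃ B, IsRelSimple U B ∧ ∃ i : B →ₗ[A] V, Function.Injective i := by
  obtain ⟨p, ⟨hp, hpU⟩, hmin⟩ := exists_minimal_of_wellFoundedLT
    (fun p : Submodule A V ↦ p ≠ ⊥ ∧ V.sub p ∈ U) ⟨⊤, top_ne_bot, hU.sub_top_iff.2 hV.1⟩
  refine ⟨V.sub p, ⟨Submodule.nontrivial_iff_ne_bot.2 hp, ⟨hpU, fun Y hY g ↦ ?_⟩,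
    fun Y hY g hg ↦ ?_⟩, p.subtype, p.injective_subtype⟩
  · rw [← LinearMap.ker_comp_of_ker_eq_bot g p.ker_subtype]
    exact hV.2 Y hY (p.subtype ∘ₗ g)
  · have hrange : LinearMap.range (p.subtype ∘ₗ g) ≠ ⊥ := fun h ↦
      hg (eq_zero_of_injective_comp p.injective_subtype (LinearMap.range_eq_bot.1 h))
    have hle := hmin ⟨hrange, hU.sub_range (N := V) _ hY⟩ (by
      rintro _ ⟨y, rfl⟩
      exact (g y).2)
    rintro ⟨x, hx⟩
    obtain ⟨y, hy⟩ := hle hx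
    exact ⟨y, Subtype.ext hy⟩

end Approximation

/-! ### Existence of relatively simple modules -/

/-- The trace of `G` in `Z`, the largest submodule of `Z` generated by `G`. -/
def FDMod.trace (G Z : FDMod k A) : Submodule A Z := ⨆ f : G →ₗ[A] Z, LinearMap.range f

theorem FDMod.range_le_trace {G Z : FDMod k A} (f : G →ₗ[A] Z) : LinearMap.range f ≤ G.trace Z :=
  le_iSup (fun f : G →ₗ[A] Z ↦ LinearMap.range f) f

theorem FDMod.range_le_trace_of_surjective {G L Z : FDMod k A} {f : G →ₗ[A] L}
    (hf : Function.Surjective f) (g : L →ₗ[A] Z) : LinearMap.range g ≤ G.trace Z := by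
  rw [← LinearMap.range_comp_of_range_eq_top g (LinearMap.range_eq_top.2 hf)]
  exact range_le_trace (g ∘ₗ f)

section Existence

variable {T U : Set (FDMod k A)} {M V G : FDMod k A} {m : M}

theorem IsTorsionClass.sub_trace (hU : IsTorsionClass U) (hG : G ∈ U) (Z : FDMod k A) :
    Z.sub (G.trace Z) ∈ U :=
  hU.sub_iSup_range _ fun _ ↦ hG

namespace IsMinApprox

theorem exists_ne_zero_comp_eq_zero (h : IsMinApprox U M m) (hV : ¬ M.HomZero V) :
    ∃ f : M →ₗ[A] V, f ≠ 0 ∧ ∀ s : M →ₗ[A] M, s m = 0 → f ∘ₗ s = 0 := by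
  obtain ⟨f₀, hf₀⟩ := not_forall.1 hV
  obtain ⟨f, hf, hmin⟩ := exists_minimalFor_of_wellFoundedLT (fun f : M →ₗ[A] V ↦ f ≠ 0)
    (fun f ↦ LinearMap.range (LinearMap.compRight k (M := M) f)) ⟨f₀, hf₀⟩
  refine ⟨f, hf, fun s hs ↦ ?_⟩
  by_contra hfs
  obtain ⟨t, ht : (f ∘ₗ s) ∘ₗ t = f⟩ := hmin (j := f ∘ₗ s) hfs
    (by rintro _ ⟨t, rfl⟩; exact ⟨s ∘ₗ t, rfl⟩) ⟨LinearMap.id, rfl⟩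
  have hbij := h.bijective (LinearMap.id - t ∘ₗ s) (by simp [hs])
  refine hfs (eq_zero_of_comp_surjective hbij.2 ?_)
  rw [LinearMap.comp_sub, ← LinearMap.comp_assoc, ht, LinearMap.comp_id, sub_self]

variable (h : IsMinApprox U M m) (hU : IsTorsionClass U)
include h hU

theorem quo_trace_coker_mem_wide : M.quo ((M.coker m).trace M) ∈ wide U :=
  (h.mem_wide_iff hU (hU.quo _ h.mem)).2 <| (h.isExtProjective_coker hU).homZero_quo hU
    (hU.sub_trace (h.coker_mem hU) M) FDMod.range_le_trace

omit hU in
theorem quo_trace_coker_notMem (hT : IsTorsionClass T) (hM : M ∉ T) :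
    M.quo ((M.coker m).trace M) ∉ T := by
  intro hMT
  have hne : ¬ M.HomZero (M.quo (torsionPart T ⊤)) := fun h0 ↦
    torsionPart_top_ne_top hT hM (by simpa using congrArg LinearMap.ker (h0 (Submodule.mkQ _)))
  obtain ⟨f, hf, hfs⟩ := h.exists_ne_zero_comp_eq_zero hne
  have hker : (M.coker m).trace M ≤ LinearMap.ker f := iSup_le fun c ↦
    LinearMap.range_le_ker_iff.2 <| eq_zero_of_comp_surjective (Submodule.mkQ_surjective _) <|
      hfs (c ∘ₗ Submodule.mkQ _) ((congrArg c (mkQ_span_singleton_self m)).trans c.map_zero)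
  refine hf ?_
  rw [← Submodule.liftQ_mkQ _ f hker,
    homZero_quo_torsionPart_top hT hMT M (Submodule.liftQ _ f hker), LinearMap.zero_comp]

theorem exists_isRelSimple (hT : IsTorsionClass T) (hTU : T ⊆ U) (hM : M ∉ T) :
    ∃ B, IsRelSimple U B ∧ ∀ Y ∈ T, Y.HomZero B := by
  let Q := M.quo ((M.coker m).trace M)
  have hQ : Q ∈ wide U := h.quo_trace_coker_mem_wide hU
  let V := Q.quo (torsionPart T ⊤)
  have hV : V ∈ wide U :=
    (h.mem_wide_iff hU (hU.quo _ hQ.1)).2 <| (h.isExtProjective_coker hU).homZero_quo hU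
      (hTU (sub_torsionPart_mem hT)) fun f ↦ by
        rw [(h.mem_wide_iff hU hQ.1).1 hQ f, LinearMap.range_zero]
        exact bot_le
  have : Nontrivial V := Submodule.Quotient.nontrivial_iff.2
    (torsionPart_top_ne_top hT (h.quo_trace_coker_notMem hT hM))
  obtain ⟨B, hB, i, hi⟩ := exists_isRelSimple_injective hU hV
  exact ⟨B, hB, fun Y hY ↦ (homZero_quo_torsionPart_top hT hY Q).of_injective hi⟩

end IsMinApprox

end Existence

/-! ### Mutation of torsion classes -/

section Mutation

variable {T U : Set (FDMod k A)} {M V B Y G L : FDMod k A} {m : M}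

namespace IsRelSimple

theorem exists_hom_leftPerp (hB : IsRelSimple U B) (hY : Y ∈ U) :
    ∃ L ∈ U ∩ leftPerp {B}, ∃ i : L →ₗ[A] Y,
      ∀ (V : FDMod k A) (f : Y →ₗ[A] V), f ≠ 0 → f ∘ₗ i = 0 → ∃ β : B →ₗ[A] V, β ≠ 0 := by
  induction hn : finrank k Y using Nat.strong_induction_on generalizing Y with
  | _ n ih =>
    by_cases hYB : Y.HomZero B
    · exact ⟨Y, ⟨hY, by simpa [leftPerp] using hYB⟩, LinearMap.id, fun V f hf hfi ↦ (hf hfi).elim⟩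
    obtain ⟨g, hg⟩ := not_forall.1 hYB
    obtain ⟨L, hL, i, hi⟩ := ih _ (hn ▸ FDMod.finrank_sub_lt (mt LinearMap.ker_eq_top.1 hg))
      (hB.mem_wide.2 Y hY g) rfl
    refine ⟨L, hL, (LinearMap.ker g).subtype ∘ₗ i, fun V f hf hfi ↦ ?_⟩
    by_cases hfg : f ∘ₗ (LinearMap.ker g).subtype = 0
    · obtain ⟨β, rfl⟩ := exists_comp_eq_of_ker_le (hB.surjective Y hY g hg) (a := f)
        (by rwa [← LinearMap.range_le_ker_iff, Submodule.range_subtype] at hfg)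
      exact ⟨β, fun hβ ↦ hf (by rw [hβ, LinearMap.zero_comp])⟩
    · exact hi V _ hfg hfi

theorem injective_of_ne_zero (hB : IsRelSimple U B) (hV : V ∈ wide U)
    {β : B →ₗ[A] V} (hβ : β ≠ 0) : Function.Injective β := by
  rw [← LinearMap.ker_eq_bot]
  by_contra hker
  have hne : (LinearMap.ker β).subtype ≠ 0 := fun h ↦
    hker (by rw [← Submodule.range_subtype (LinearMap.ker β), h, LinearMap.range_zero])
  have htop := LinearMap.range_eq_top.2
    (hB.surjective _ (hV.2 B hB.mem_wide.1 β) (LinearMap.ker β).subtype hne)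
  rw [Submodule.range_subtype] at htop
  exact hβ (LinearMap.ker_eq_top.1 htop)

end IsRelSimple

namespace IsMinApprox

variable (h : IsMinApprox U M m) (hU : IsTorsionClass U) (hB : IsRelSimple U B)
include h hU hB

theorem subsingleton_of_comp_eq_zero {i : L →ₗ[A] M}
    (hi : ∀ (V : FDMod k A) (f : M →ₗ[A] V), f ≠ 0 → f ∘ₗ i = 0 → ∃ β : B →ₗ[A] V, β ≠ 0)
    (hV : V ∈ U) (hVB : V.HomZero B) (hC : (M.coker m).HomZero V)
    (hiV : ∀ f : M →ₗ[A] V, f ∘ₗ i = 0) : Subsingleton V := by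
  induction hn : finrank k V using Nat.strong_induction_on generalizing V with
  | _ n ih =>
    by_contra hV0
    obtain ⟨v, hv⟩ := not_forall.1 (mt (subsingleton_iff_forall_eq (0 : V)).2 hV0)
    obtain ⟨f, rfl⟩ := h.exists_hom V hV v
    obtain ⟨β, hβ⟩ := hi V f (fun hf ↦ hv (by rw [hf, LinearMap.zero_apply])) (hiV f)
    have hinj := hB.injective_of_ne_zero ((h.mem_wide_iff hU hV).2 hC) hβ
    let W := LinearMap.range β
    have hW : V.sub W ∈ U := hU.sub_range β hB.mem_wide.1
    have hsub : Subsingleton (V ⧸ W) := by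
      refine ih _ (hn ▸ FDMod.finrank_quo_lt (mt LinearMap.range_eq_bot.1 hβ))
        (V := V.quo W) (hU.quo W hV) (hVB.of_surjective W.mkQ_surjective)
        ((h.isExtProjective_coker hU).homZero_quo hU hW fun c ↦ ?_) (fun g ↦ ?_) rfl
      · rw [hC c, LinearMap.range_zero]
        exact bot_le
      · obtain ⟨g, rfl⟩ := (h.isExtProjective hU).exists_lift hU W.mkQ_surjective
          (by rwa [W.ker_mkQ]) g
        rw [LinearMap.comp_assoc, hiV g, LinearMap.comp_zero]
    have hsurj : Function.Surjective β :=
      LinearMap.range_eq_top.1 (Submodule.Quotient.subsingleton_iff.1 hsub)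
    let e := LinearEquiv.ofBijective β ⟨hinj, hsurj⟩
    exact hv (e.symm.map_eq_zero_iff.1 (LinearMap.congr_fun (hVB e.symm.toLinearMap) (f m)))

theorem exists_generator :
    ∃ G ∈ U ∩ leftPerp {B}, ∀ Z ∈ U ∩ leftPerp {B}, G.trace Z = ⊤ := by
  obtain ⟨L, hL, i, hi⟩ := hB.exists_hom_leftPerp h.mem
  have hC : M.coker m ∈ U ∩ leftPerp {B} := ⟨h.coker_mem hU, by
    simpa [leftPerp] using (h.mem_wide_iff hU hB.mem_wide.1).1 hB.mem_wide⟩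
  let G := (M.coker m).prod L
  refine ⟨G, (hU.inter (isTorsionClass_leftPerp _)).prod hC hL, fun Z hZ ↦ ?_⟩
  have hG : G ∈ U := hU.prod hC.1 hL.1
  have hW := hU.sub_trace hG Z
  refine Submodule.Quotient.subsingleton_iff.1 <|
    h.subsingleton_of_comp_eq_zero hU hB hi (V := Z.quo (G.trace Z)) (hU.quo _ hZ.1)
      ((hZ.2 B rfl).of_surjective (Submodule.mkQ_surjective _))
      ((h.isExtProjective_coker hU).homZero_quo hU hW fun c ↦ ?_) fun f ↦ ?_
  · exact FDMod.range_le_trace_of_surjective (f := LinearMap.fst A (M.coker m) L)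
      LinearMap.fst_surjective c
  · obtain ⟨f, rfl⟩ := (h.isExtProjective hU).exists_lift hU (Submodule.mkQ_surjective _)
      (by rwa [Submodule.ker_mkQ]) f
    rw [LinearMap.comp_assoc, ← LinearMap.range_le_ker_iff, Submodule.ker_mkQ]
    exact FDMod.range_le_trace_of_surjective (f := LinearMap.snd A (M.coker m) L)
      LinearMap.snd_surjective (f ∘ₗ i)

end IsMinApprox

theorem IsTorsionClass.exists_isApprox_of_trace_eq_top (hU : IsTorsionClass U) (hG : G ∈ U)
    (hgen : ∀ Z ∈ U, G.trace Z = ⊤) : ∃ M m, IsApprox U M m := by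
  let b := Module.finBasis k G
  let π (j) : G.pow (finrank k G) →ₗ[A] G := LinearMap.proj (φ := fun _ ↦ (G : Type u)) j
  refine ⟨G.pow (finrank k G), b, hU.pow hG _, fun Z hZ y ↦ ?_⟩
  have hy : y ∈ G.trace Z := by rw [hgen Z hZ]; trivial
  induction hy using Submodule.iSup_induction' with
  | mem f y hy =>
    obtain ⟨x, rfl⟩ := hy
    refine ⟨f ∘ₗ ∑ j, b.repr x j • π j, congrArg f ?_⟩
    simp [π]
  | zero => exact ⟨0, rfl⟩
  | add y z _ _ hy hz =>
    obtain ⟨f, rfl⟩ := hy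
    obtain ⟨g, rfl⟩ := hz
    exact ⟨f + g, rfl⟩

theorem IsMinApprox.exists_isMinApprox_inter_leftPerp (h : IsMinApprox U M m)
    (hU : IsTorsionClass U) (hB : IsRelSimple U B) :
    ∃ M' m', IsMinApprox (U ∩ leftPerp {B}) M' m' := by
  have hUB := hU.inter (isTorsionClass_leftPerp {B})
  obtain ⟨G, hG, hgen⟩ := h.exists_generator hU hB
  obtain ⟨M₁, m₁, h₁⟩ := hUB.exists_isApprox_of_trace_eq_top hG hgen
  exact h₁.exists_isMinApprox hUB

theorem IsTorsionClass.exists_isMinApprox [IsAlgClosed k] [FiniteDimensional k A]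
    (hT : IsTorsionClass T) (hbf : BrickFinite k A) : ∃ M m, IsMinApprox T M m := by
  obtain ⟨r, bricks, hbricks⟩ := hbf
  have hA : IsApprox Set.univ (⟨A⟩ : FDMod k A) (1 : A) :=
    ⟨trivial, fun Y _ y ↦ ⟨LinearMap.toSpanSingleton A Y y, one_smul A y⟩⟩
  obtain ⟨U, ⟨hU, hTU, M, m, h⟩, hmin⟩ := exists_minimalFor_of_wellFoundedLT
    (fun U ↦ IsTorsionClass U ∧ T ⊆ U ∧ ∃ M m, IsMinApprox U M m) (fun U ↦ {i | bricks i ∈ U})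
    ⟨_, .univ, Set.subset_univ T, hA.exists_isMinApprox .univ⟩
  by_cases hM : M ∈ T
  · exact ⟨M, m, ⟨hM, fun Y hY ↦ h.exists_hom Y (hTU hY)⟩, h.bijective⟩
  obtain ⟨B, hB, hTB⟩ := h.exists_isRelSimple hU hT hTU hM
  obtain ⟨i, ⟨e⟩⟩ := hbricks B hB.isBrick
  have hle := hmin (j := U ∩ leftPerp {B}) ⟨hU.inter (isTorsionClass_leftPerp _),
    fun Y hY ↦ ⟨hTU hY, by simpa [leftPerp] using hTB Y hY⟩,
    h.exists_isMinApprox_inter_leftPerp hU hB⟩ fun _ hi ↦ hi.1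
  have hzero := (hle (hU.of_equiv e hB.mem_wide.1)).2 B rfl e.symm.toLinearMap
  have := hB.nontrivial
  obtain ⟨b, hb⟩ := exists_ne (0 : B)
  exact (hb (by simpa using LinearMap.congr_fun hzero (e b))).elim

end Mutation

/-! ### Right minimal covers -/

/-- A map `a : N → B` is right minimal if every endomorphism of `N` over `B` is bijective. -/
def IsRightMinimal {N B : FDMod k A} (a : N →ₗ[A] B) : Prop :=
  ∀ s : N →ₗ[A] N, a ∘ₗ s = a → Function.Bijective s

section RightMinimal

variable {U : Set (FDMod k A)} {M N B X : FDMod k A}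

theorem exists_isRightMinimal {𝓟 : Set (FDMod k A)}
    (hretract : ∀ {N N' : FDMod k A} (i : N' →ₗ[A] N) (r : N →ₗ[A] N'),
      r ∘ₗ i = LinearMap.id → N ∈ 𝓟 → N' ∈ 𝓟)
    (h : ∃ N ∈ 𝓟, ∃ a : N →ₗ[A] B, Function.Surjective a) :
    ∃ N ∈ 𝓟, ∃ a : N →ₗ[A] B, Function.Surjective a ∧ IsRightMinimal a := by
  obtain ⟨N, ⟨hN, a, ha⟩, hmin⟩ := exists_minimalFor_of_wellFoundedLT
    (fun N : FDMod k A ↦ N ∈ 𝓟 ∧ ∃ a : N →ₗ[A] B, Function.Surjective a) (fun N ↦ finrank k N) h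
  refine ⟨N, hN, a, ha, fun s hs ↦ IsNoetherian.bijective_of_surjective_endomorphism s ?_⟩
  have has (r : ℕ) : a ∘ₗ (s ^ r : Module.End A N) = a := by
    induction r with
    | zero => rfl
    | succ r ih => rw [pow_succ, Module.End.mul_eq_comp, ← LinearMap.comp_assoc, ih, hs]
  obtain ⟨r, hr, hr1⟩ := ((LinearMap.eventually_isCompl_ker_pow_range_pow (R := A) s).and
    (Filter.eventually_ge_atTop 1)).exists
  let W := LinearMap.range (s ^ r)
  have hW : N.sub W ∈ 𝓟 := hretract W.subtype (W.projectionOnto _ hr.symm)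
    (LinearMap.ext fun x ↦ Submodule.projectionOnto_apply_left hr.symm x) hN
  have haW : Function.Surjective (a ∘ₗ W.subtype) := fun b ↦ by
    obtain ⟨x, rfl⟩ := ha b
    exact ⟨⟨_, x, rfl⟩, LinearMap.congr_fun (has r) x⟩
  have htop : W = ⊤ := by
    by_contra hne
    exact (FDMod.finrank_sub_lt hne).not_ge
      (hmin (j := N.sub W) ⟨hW, _, haW⟩ (FDMod.finrank_sub_lt hne).le)
  intro x
  obtain ⟨y, rfl⟩ := LinearMap.range_eq_top.1 htop x
  exact ⟨(s ^ (r - 1)) y, by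
    rw [← Module.End.mul_apply, ← pow_succ', Nat.sub_add_cancel hr1]⟩

theorem exists_projective_surjective [FiniteDimensional k A] (Y : FDMod k A) :
    ∃ P : FDMod k A, Module.Projective A P ∧ ∃ π : P →ₗ[A] Y, Function.Surjective π := by
  have : Module.Finite A Y := Module.Finite.of_restrictScalars_finite k A Y
  obtain ⟨r, π, hπ⟩ := Module.Finite.exists_fin' A Y
  exact ⟨⟨Fin r → A⟩, inferInstanceAs (Module.Projective A (Fin r → A)), π, hπ⟩

theorem exists_projective_cover [FiniteDimensional k A] (Y : FDMod k A) :
    ∃ P : FDMod k A, Module.Projective A P ∧ ∃ q : P →ₗ[A] Y, Function.Surjective q ∧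
      ∀ L : Submodule A P, Codisjoint L (LinearMap.ker q) → L = ⊤ := by
  obtain ⟨P, hP, q, hq, hmin⟩ := exists_isRightMinimal (B := Y)
    (𝓟 := {P | Module.Projective A P}) (fun i r hri hP ↦ hP.of_split i r hri)
    (exists_projective_surjective Y)
  refine ⟨P, hP, q, hq, fun L hL ↦ ?_⟩
  have hqL : Function.Surjective (q ∘ₗ L.subtype) := by
    rw [← LinearMap.range_eq_top, LinearMap.range_comp, Submodule.range_subtype,
      Submodule.map_eq_range_iff.2 hL, LinearMap.range_eq_top.2 hq]
  have : Module.Projective A P := hP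
  obtain ⟨f, hf⟩ := Module.projective_lifting_property (q ∘ₗ L.subtype) q hqL
  rw [eq_top_iff, ← LinearMap.range_eq_top.2 (hmin (L.subtype ∘ₗ f) hf).2]
  exact (LinearMap.range_comp_le_range _ _).trans L.range_subtype.le

theorem IsRelSimple.ker_le_ker (hU : IsTorsionClass U) (hB : IsRelSimple U B) (hX : IsRelSimple U X)
    (hNU : N ∈ U) (hN : IsExtProjective U N) {a : N →ₗ[A] B} (ha : IsRightMinimal a)
    {b : N →ₗ[A] X} (hb : b ≠ 0) : LinearMap.ker b ≤ LinearMap.ker a := by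
  rw [← Submodule.range_subtype (LinearMap.ker b), LinearMap.range_le_ker_iff]
  by_contra hne
  have hK := hX.mem_wide.2 N hNU b
  obtain ⟨f, hf⟩ := hN.exists_lift hU (hB.surjective _ hK _ hne) (hB.mem_wide.2 _ hK _) a
  have hs := ha ((LinearMap.ker b).subtype ∘ₗ f) hf
  refine hb (eq_zero_of_comp_surjective hs.2 ?_)
  rw [← LinearMap.comp_assoc, LinearMap.comp_ker_subtype, LinearMap.zero_comp]

theorem IsMinApprox.exists_isExtProjective_dual {m : M} (h : IsMinApprox U M m)
    (hU : IsTorsionClass U) (hB : IsRelSimple U B) : ∃ N, IsExtProjective U N ∧ ¬ N.HomZero B ∧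
      ∀ X, IsRelSimple U X → X.HomZero B → N.HomZero X := by
  have := hB.nontrivial
  obtain ⟨y, hy⟩ := exists_ne (0 : B)
  obtain ⟨f, rfl⟩ := h.exists_hom B hB.mem_wide.1 y
  have hf : f ≠ 0 := fun hf ↦ hy (by rw [hf, LinearMap.zero_apply])
  obtain ⟨N, ⟨hNU, hN⟩, a, ha, hmin⟩ := exists_isRightMinimal (B := B)
    (𝓟 := {N | N ∈ U ∧ IsExtProjective U N})
    (fun i r hri hN ↦ ⟨hU.of_surjective r (Function.LeftInverse.surjective
      (LinearMap.congr_fun hri)) hN.1, hN.2.of_retract hU hri⟩)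
    ⟨M, ⟨h.mem, h.isExtProjective hU⟩, f, hB.surjective M h.mem f hf⟩
  have ha0 : a ≠ 0 := fun h0 ↦ hy (by
    obtain ⟨x, hx⟩ := ha (f m)
    rw [← hx, h0, LinearMap.zero_apply])
  refine ⟨N, hN, fun h0 ↦ ha0 (h0 a), fun X hX hXB b ↦ ?_⟩
  by_contra hb
  obtain ⟨φ, rfl⟩ := exists_comp_eq_of_ker_le (hX.surjective N hNU b hb)
    (hB.ker_le_ker hU hX hNU hN hmin hb)
  exact ha0 (by rw [hXB φ, LinearMap.zero_comp])

end RightMinimal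

/-! ### Dimension counts -/

/-- `dim_k Hom_A(M, N)`. -/
noncomputable abbrev FDMod.homDim (M N : FDMod k A) : ℕ := finrank k (M →ₗ[A] N)

/-- An additive function on `mod A`, i.e. a function on its Grothendieck group. -/
def IsAdditive (χ : FDMod k A → ℕ) : Prop :=
  ∀ ⦃L M N : FDMod k A⦄ (i : L →ₗ[A] M) (p : M →ₗ[A] N),
    Function.Injective i → Function.Exact i p → Function.Surjective p → χ M = χ L + χ N

/-- `v` lists the multiplicities of the modules `S s` as composition factors of `Y`, in the sense
that every additive function takes on `Y` the value these multiplicities predict. -/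
def IsMultiplicity {ι : Type*} [Fintype ι] (S : ι → FDMod k A) (Y : FDMod k A) (v : ι → ℕ) : Prop :=
  ∀ χ : FDMod k A → ℕ, IsAdditive χ → χ Y = ∑ s, v s * χ (S s)

section Dimension

theorem finrank_eq_add_of_exact {K V₁ V₂ V₃ : Type*} [DivisionRing K] [AddCommGroup V₁]
    [AddCommGroup V₂] [AddCommGroup V₃] [Module K V₁] [Module K V₂] [Module K V₃]
    [FiniteDimensional K V₂] {f : V₁ →ₗ[K] V₂} {g : V₂ →ₗ[K] V₃} (hf : Function.Injective f)
    (h : Function.Exact f g) (hg : Function.Surjective g) :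
    finrank K V₂ = finrank K V₁ + finrank K V₃ := by
  rw [← g.finrank_range_add_finrank_ker, h.linearMap_ker_eq, LinearMap.finrank_range_of_inj hf,
    LinearMap.range_eq_top.2 hg, finrank_top, add_comm]

variable {U : Set (FDMod k A)} {M N Y P P₀ P₁ : FDMod k A}

theorem FDMod.homDim_eq_zero_iff : M.homDim N = 0 ↔ M.HomZero N :=
  Module.finrank_zero_iff.trans (subsingleton_iff_forall_eq 0)

theorem isAdditive_homDim [Module.Projective A P] : IsAdditive P.homDim := by
  intro L M N i p hi hex hp
  refine finrank_eq_add_of_exact (f := LinearMap.compRight k i) (g := LinearMap.compRight k p)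
    (fun f g hfg ↦ (LinearMap.cancel_left hi).1 hfg) (fun f ↦ ⟨fun hf ↦ ?_, ?_⟩)
    fun f ↦ Module.projective_lifting_property p f hp
  · have hfi (x : P) : f x ∈ LinearMap.range i := (hex (f x)).1 (LinearMap.congr_fun hf x)
    obtain ⟨g, hg⟩ := Module.projective_lifting_property i.rangeRestrict
      (f.codRestrict (LinearMap.range i) hfi) i.surjective_rangeRestrict
    exact ⟨g, LinearMap.ext fun x ↦ congrArg Subtype.val (LinearMap.congr_fun hg x)⟩
  · rintro ⟨f, rfl⟩
    exact LinearMap.ext fun x ↦ hex.apply_apply_eq_zero (f x)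

namespace IsAdditive

variable {χ : FDMod k A → ℕ} (hχ : IsAdditive χ)
include hχ

theorem eq_zero (hM : Subsingleton M) : χ M = 0 := by
  have := hχ (LinearMap.id (M := M)) (0 : M →ₗ[A] M) Function.injective_id
    (fun x ↦ ⟨fun _ ↦ ⟨x, rfl⟩, fun _ ↦ rfl⟩) fun x ↦ ⟨0, Subsingleton.elim _ _⟩
  omega

theorem eq_of_equiv (e : M ≃ₗ[A] N) : χ N = χ M := by
  have hZ : Subsingleton (N.sub ⊥) := inferInstanceAs (Subsingleton (⊥ : Submodule A N))
  have h := hχ e.toLinearMap (0 : N →ₗ[A] N.sub ⊥) e.injective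
    (fun x ↦ ⟨fun _ ↦ e.surjective x, fun _ ↦ rfl⟩) fun x ↦ ⟨0, Subsingleton.elim _ _⟩
  rwa [hχ.eq_zero hZ, add_zero] at h

theorem eq_add_quo (p : Submodule A M) : χ M = χ (M.sub p) + χ (M.quo p) :=
  hχ p.subtype p.mkQ p.injective_subtype (LinearMap.exact_subtype_mkQ p) p.mkQ_surjective

end IsAdditive

theorem exists_isMultiplicity {ι : Type*} [Fintype ι] {S : ι → FDMod k A}
    (hS : ∀ T : FDMod k A, IsSimpleModule A T → ∃ s, T.Iso (S s)) (Y : FDMod k A) :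
    ∃ v, IsMultiplicity S Y v := by
  classical
  induction hn : finrank k Y using Nat.strong_induction_on generalizing Y with
  | _ n ih =>
    rcases subsingleton_or_nontrivial Y with hY | hY
    · exact ⟨0, fun χ hχ ↦ by simp [hχ.eq_zero hY]⟩
    obtain ⟨p, hp⟩ := IsAtomic.exists_atom (Submodule A Y)
    obtain ⟨s, ⟨e⟩⟩ := hS (Y.sub p) (isSimpleModule_iff_isAtom.2 hp)
    obtain ⟨v, hv⟩ := ih _ (hn ▸ FDMod.finrank_quo_lt hp.1) (Y.quo p) rfl
    refine ⟨Pi.single s 1 + v, fun χ hχ ↦ ?_⟩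
    rw [hχ.eq_add_quo p, hv χ hχ, ← hχ.eq_of_equiv e]
    simp [add_mul, Finset.sum_add_distrib, Pi.single_apply]

namespace IsExtProjective

theorem exists_extension_of_superfluous [Module.Projective A P₀] (hU : IsTorsionClass U)
    (hN : IsExtProjective U N) (hY : Y ∈ U) {π : P₀ →ₗ[A] N} (hπ : Function.Surjective π)
    {q : P₁ →ₗ[A] LinearMap.ker π} (hq : Function.Surjective q)
    (hsup : ∀ L : Submodule A P₁, Codisjoint L (LinearMap.ker q) → L = ⊤) (h : P₁ →ₗ[A] Y) :
    ∃ e : P₀ →ₗ[A] Y, e ∘ₗ (LinearMap.ker π).subtype ∘ₗ q = h := by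
  let W := (LinearMap.ker q).map h
  obtain ⟨φ, hφ⟩ := exists_comp_eq_of_ker_le hq (a := W.mkQ ∘ₗ h) fun x hx ↦
    (Submodule.Quotient.mk_eq_zero W).2 ⟨x, hx, rfl⟩
  obtain ⟨ψ, rfl⟩ := hN.exists_extension hU (Y := Y.quo W) (hU.quo W hY) hπ φ
  obtain ⟨e, rfl⟩ := Module.projective_lifting_property W.mkQ ψ W.mkQ_surjective
  refine ⟨e, (sub_eq_zero.1 (LinearMap.ker_eq_top.1 (hsup _ ?_))).symm⟩
  refine codisjoint_iff_le_sup.2 fun x _ ↦ ?_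
  obtain ⟨y, hy : q y = 0, hyx⟩ : h x - e (q x) ∈ W :=
    (Submodule.Quotient.eq W).1 (LinearMap.congr_fun hφ x).symm
  refine Submodule.mem_sup.2 ⟨x - y, ?_, y, hy, by abel⟩
  simp [hy, hyx]

theorem exists_presentation [FiniteDimensional k A] (hU : IsTorsionClass U)
    (hN : IsExtProjective U N) : ∃ P₀ P₁ : FDMod k A, Module.Projective A P₀ ∧
      Module.Projective A P₁ ∧ ∀ Y ∈ U, P₀.homDim Y = N.homDim Y + P₁.homDim Y := by
  obtain ⟨P₀, hP₀, π, hπ⟩ := exists_projective_surjective N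
  obtain ⟨P₁, hP₁, q, hq, hsup⟩ := exists_projective_cover (P₀.sub (LinearMap.ker π))
  refine ⟨P₀, P₁, hP₀, hP₁, fun Y hY ↦ ?_⟩
  refine finrank_eq_add_of_exact (f := LinearMap.lcomp k Y π)
    (g := LinearMap.lcomp k Y ((LinearMap.ker π).subtype ∘ₗ q))
    (fun f g hfg ↦ (LinearMap.cancel_right hπ).1 hfg) (fun e ↦ ⟨fun he ↦ ?_, ?_⟩)
    (hN.exists_extension_of_superfluous hU hY hπ hq hsup)
  · refine exists_comp_eq_of_ker_le hπ ?_
    rw [← Submodule.range_subtype (LinearMap.ker π), LinearMap.range_le_ker_iff]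
    exact eq_zero_of_comp_surjective hq he
  · rintro ⟨f, rfl⟩
    exact LinearMap.ext fun x ↦ (congrArg f (q x).2).trans f.map_zero

theorem exists_homDim_eq_sum [FiniteDimensional k A] {ι : Type*} [Fintype ι]
    (hU : IsTorsionClass U) (hN : IsExtProjective U N) (S : ι → FDMod k A) :
    ∃ w : ι → ℤ, ∀ Y ∈ U, ∀ v, IsMultiplicity S Y v → (N.homDim Y : ℤ) = ∑ s, v s * w s := by
  obtain ⟨P₀, P₁, hP₀, hP₁, hdim⟩ := hN.exists_presentation hU
  refine ⟨fun s ↦ P₀.homDim (S s) - P₁.homDim (S s), fun Y hY v hv ↦ ?_⟩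
  have h := hdim Y hY
  rw [hv _ isAdditive_homDim, hv _ (isAdditive_homDim (P := P₁))] at h
  zify at h
  simp only [mul_sub, Finset.sum_sub_distrib]
  linarith

end IsExtProjective

end Dimension

theorem eq_zero_of_mulVec_eq_zero_of_mul_eq_diagonal {R ι : Type*} [CommRing R] [IsDomain R]
    [Fintype ι] [DecidableEq ι] {V W : Matrix ι ι R} {d c : ι → R} (hd : ∀ i, d i ≠ 0)
    (hVW : V * W = Matrix.diagonal d) (hc : V.mulVec c = 0) : c = 0 := by
  refine Matrix.eq_zero_of_mulVec_eq_zero (fun hV ↦ ?_) hc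
  have hdet := congrArg Matrix.det hVW
  rw [Matrix.det_mul, hV, zero_mul, Matrix.det_diagonal] at hdet
  exact Finset.prod_ne_zero_iff.2 (fun i _ ↦ hd i) hdet.symm

theorem IsMinApprox.span_singleton_eq_top [FiniteDimensional k A] {ι : Type*} [Finite ι]
    {U : Set (FDMod k A)} {M : FDMod k A} {m : M} {S X : ι → FDMod k A} (h : IsMinApprox U M m)
    (hU : IsTorsionClass U) (hS : ∀ T : FDMod k A, IsSimpleModule A T → ∃ s, T.Iso (S s))
    (hX : ∀ i, IsRelSimple U (X i)) (horth : ∀ i j, i ≠ j → (X i).HomZero (X j)) :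
    Submodule.span A {m} = ⊤ := by
  classical
  have := Fintype.ofFinite ι
  choose N hN hNX hdual using fun j ↦ h.exists_isExtProjective_dual hU (hX j)
  choose w hw using fun j ↦ (hN j).exists_homDim_eq_sum hU S
  obtain ⟨c, hc⟩ := (h.isExtProjective_coker hU).exists_homDim_eq_sum hU S
  choose v hv using fun i ↦ exists_isMultiplicity hS (X i)
  let V : Matrix ι ι ℤ := Matrix.of fun i s ↦ (v i s : ℤ)
  have hXU (i : ι) : X i ∈ U := (hX i).mem_wide.1
  have hVc : V.mulVec c = 0 := funext fun i ↦ by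
    have hCX := (h.mem_wide_iff hU (hXU i)).1 (hX i).mem_wide
    rw [← FDMod.homDim_eq_zero_iff] at hCX
    exact (hc (X i) (hXU i) (v i) (hv i)).symm.trans (Nat.cast_eq_zero.2 hCX)
  have hVW : V * (Matrix.of w).transpose = Matrix.diagonal fun i ↦ ((N i).homDim (X i) : ℤ) := by
    ext i j
    refine (hw j (X i) (hXU i) (v i) (hv i)).symm.trans ?_
    rcases eq_or_ne i j with rfl | hij
    · rw [Matrix.diagonal_apply_eq]
    · have hNX := hdual j (X i) (hX i) (horth i j hij)
      rw [Matrix.diagonal_apply_ne _ hij, FDMod.homDim_eq_zero_iff.2 hNX, Nat.cast_zero]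
  have hc0 : c = 0 := eq_zero_of_mulVec_eq_zero_of_mul_eq_diagonal
    (fun i ↦ Nat.cast_ne_zero.2 (mt FDMod.homDim_eq_zero_iff.1 (hNX i))) hVW hVc
  obtain ⟨u, hu⟩ := exists_isMultiplicity hS (M.coker m)
  have hCC : (M.coker m).homDim (M.coker m) = 0 := by
    simpa [hc0] using hc _ (h.coker_mem hU) u hu
  have hid := FDMod.homDim_eq_zero_iff.1 hCC LinearMap.id
  exact Submodule.Quotient.subsingleton_iff.1
    (subsingleton_of_forall_eq 0 (LinearMap.congr_fun hid))

/-! ### Semibricks -/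

theorem FDMod.IsBrick.exists_comp_eq_id {B Y : FDMod k A} (hB : B.IsBrick) {s : B →ₗ[A] Y}
    {g : Y →ₗ[A] B} (h : g ∘ₗ s ≠ 0) : ∃ σ : B →ₗ[A] Y, g ∘ₗ σ = LinearMap.id := by
  obtain ⟨c, hc⟩ := hB.2 (g ∘ₗ s)
  have hc0 : c ≠ 0 := by
    rintro rfl
    exact h (LinearMap.ext fun x ↦ by simp [hc])
  refine ⟨c⁻¹ • s, ?_⟩
  ext x
  calc g (c⁻¹ • s x) = c⁻¹ • g (s x) := (g.restrictScalars k).map_smul _ _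
    _ = c⁻¹ • c • x := congrArg _ (hc x)
    _ = x := inv_smul_smul₀ hc0 x

/-- The smallest torsion class containing every `X i`. -/
def torsionClosure {ι : Type*} (X : ι → FDMod k A) : Set (FDMod k A) :=
  leftPerp {F | ∀ i, (X i).HomZero F}

section Semibrick

variable {ι : Type*} {X : ι → FDMod k A} {Y : FDMod k A} {i j : ι}

theorem isTorsionClass_torsionClosure : IsTorsionClass (torsionClosure X) :=
  isTorsionClass_leftPerp _

theorem mem_torsionClosure (i : ι) : X i ∈ torsionClosure X := fun _ hF ↦ hF i

theorem exists_ne_zero_of_mem_torsionClosure [Nontrivial Y] (hY : Y ∈ torsionClosure X) :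
    ∃ i, ∃ s : X i →ₗ[A] Y, s ≠ 0 := by
  by_contra! h
  obtain ⟨y, hy⟩ := exists_ne (0 : Y)
  exact hy (LinearMap.congr_fun (hY Y h LinearMap.id) y)

variable (hX : ∀ i, (X i).IsBrick) (horth : ∀ i j, i ≠ j → (X i).HomZero (X j))
include hX horth

theorem exists_comp_eq_id_of_comp_ne_zero {s : X j →ₗ[A] Y} {g : Y →ₗ[A] X i}
    (h : g ∘ₗ s ≠ 0) : ∃ σ : X i →ₗ[A] Y, g ∘ₗ σ = LinearMap.id := by
  obtain rfl : j = i := by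
    by_contra hji
    exact h (horth j i hji _)
  exact (hX j).exists_comp_eq_id h

theorem surjective_of_mem_torsionClosure (hY : Y ∈ torsionClosure X) {g : Y →ₗ[A] X i}
    (hg : g ≠ 0) : Function.Surjective g := by
  let W := LinearMap.range g
  have : Nontrivial W := Submodule.nontrivial_iff_ne_bot.2 (mt LinearMap.range_eq_bot.1 hg)
  obtain ⟨j, s, hs⟩ := exists_ne_zero_of_mem_torsionClosure
    (isTorsionClass_torsionClosure.sub_range g hY)
  obtain ⟨σ, hσ⟩ := exists_comp_eq_id_of_comp_ne_zero hX horth (Y := (X i).sub W)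
    (mt (eq_zero_of_injective_comp W.injective_subtype) hs)
  intro x
  have hx : (σ x : X i) = x := LinearMap.congr_fun hσ x
  exact hx ▸ (σ x).2

theorem injective_of_forall_comp_eq_zero (hY : Y ∈ torsionClosure X) {g : Y →ₗ[A] X i}
    (hker : ∀ Z ∈ torsionClosure X, ∀ f : Z →ₗ[A] Y, g ∘ₗ f = 0 → f = 0) :
    Function.Injective g := by
  rcases subsingleton_or_nontrivial Y with _ | _
  · exact Function.injective_of_subsingleton g
  obtain ⟨j, s, hs⟩ := exists_ne_zero_of_mem_torsionClosure hY
  obtain ⟨σ, hσ⟩ := exists_comp_eq_id_of_comp_ne_zero hX horth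
    (mt (hker (X j) (mem_torsionClosure j) s) hs)
  have hσg : LinearMap.id - σ ∘ₗ g = 0 := hker Y hY _ <| by
    rw [LinearMap.comp_sub, ← LinearMap.comp_assoc, hσ, LinearMap.comp_id, LinearMap.id_comp,
      sub_self]
  exact Function.LeftInverse.injective (g := σ) (LinearMap.congr_fun (sub_eq_zero.1 hσg).symm)

theorem isRelSimple_torsionClosure (i : ι) : IsRelSimple (torsionClosure X) (X i) := by
  have hT : IsTorsionClass (torsionClosure X) := isTorsionClass_torsionClosure
  refine ⟨(hX i).1, ⟨mem_torsionClosure i, fun Y hY g ↦ ?_⟩,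
    fun Y hY g hg ↦ surjective_of_mem_torsionClosure hX horth hY hg⟩
  let N := torsionPart (torsionClosure X) (LinearMap.ker g)
  let g' : Y ⧸ N →ₗ[A] X i := N.liftQ g torsionPart_le
  have hker : LinearMap.ker g' = (LinearMap.ker g).map N.mkQ := Submodule.ker_liftQ _ _ _
  have hinj : Function.Injective g' :=
    injective_of_forall_comp_eq_zero hX horth (Y := Y.quo N) (hT.quo N hY) fun Z hZ f hf ↦
      eq_zero_of_range_le_map_torsionPart hT hZ f (hker ▸ LinearMap.range_le_ker_iff.2 hf)
  have hle : LinearMap.ker g ≤ N := by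
    rw [← N.ker_mkQ, LinearMap.le_ker_iff_map, ← hker, LinearMap.ker_eq_bot.2 hinj]
  rw [hle.antisymm torsionPart_le]
  exact sub_torsionPart_mem hT

end Semibrick

theorem isSimpleModule_of_orthogonal_bricks [IsAlgClosed k] [FiniteDimensional k A]
    (hbf : BrickFinite k A) {ι : Type*} [Finite ι] {S X : ι → FDMod k A}
    (hS : ∀ T : FDMod k A, IsSimpleModule A T → ∃ s, T.Iso (S s)) (hX : ∀ i, (X i).IsBrick)
    (horth : ∀ i j, i ≠ j → (X i).HomZero (X j)) (i : ι) : IsSimpleModule A (X i) := by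
  have hT : IsTorsionClass (torsionClosure X) := isTorsionClass_torsionClosure
  have hrel := isRelSimple_torsionClosure hX horth
  obtain ⟨M, m, h⟩ := hT.exists_isMinApprox hbf
  refine isSimpleModule_iff_toSpanSingleton_surjective.2 ⟨(hX i).1, fun y hy x ↦ ?_⟩
  obtain ⟨f, rfl⟩ := h.exists_hom (X i) (mem_torsionClosure i) y
  obtain ⟨z, rfl⟩ := (hrel i).surjective M h.mem f (by rintro rfl; exact hy rfl) x
  have hz : z ∈ Submodule.span A {m} := h.span_singleton_eq_top hT hS hrel horth ▸ trivial
  obtain ⟨a, rfl⟩ := Submodule.mem_span_singleton.1 hz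
  exact ⟨a, (f.map_smul a m).symm⟩

/-- Let `A` be a brick-finite finite-dimensional algebra over an
algebraically closed field of rank `n`. Then the only semibrick of size `n` in
`mod A` is the set of the `n` simple `A`-modules: if `X 1, ..., X n` are `n`
pairwise non-isomorphic, pairwise Hom-orthogonal bricks, then each `X i` is simple
and `{X i}` is a complete set of representatives of the simple `A`-modules. -/
theorem stmt4 {k A : Type u} [Field k] [IsAlgClosed k] [Ring A] [Algebra k A]
    [FiniteDimensional k A] (n : ℕ) (hrank : HasRank k A n) (hbf : BrickFinite k A)
    (X : Fin n → FDMod k A)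
    (hbrick : ∀ i, (X i).IsBrick)
    (hnoniso : ∀ i j, i ≠ j → ¬(X i).Iso (X j))
    (horth : ∀ i j, i ≠ j → (X i).HomOrth (X j)) :
    (∀ i, IsSimpleModule A (X i).carrier) ∧
    (∀ T : FDMod k A, IsSimpleModule A T.carrier → ∃ i, T.Iso (X i)) := by
  obtain ⟨S, -, -, hS⟩ := hrank
  have hsimple := isSimpleModule_of_orthogonal_bricks hbf hS hbrick fun i j hij ↦ (horth i j hij).1
  refine ⟨hsimple, fun T hT ↦ ?_⟩
  choose σ hσ using fun i ↦ hS (X i) (hsimple i)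
  have hinj : Function.Injective σ := by
    intro i j hij
    by_contra hne
    obtain ⟨e⟩ := hσ i
    obtain ⟨f⟩ := hσ j
    exact hnoniso i j hne ⟨e.trans (hij ▸ f.symm)⟩
  obtain ⟨s, ⟨e⟩⟩ := hS T hT
  obtain ⟨i, rfl⟩ := Finite.surjective_of_injective hinj s
  obtain ⟨f⟩ := hσ i
  exact ⟨i, ⟨e.trans f.symm⟩⟩
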